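/- Energy conservation of the Strang-split Scheme-5 (Theorem 2.2). Let (f_0, E_0, B_0), (f_1, E_1, B_1), ..., (f_5, E_5, B_5) be states consisting of phase-space functions f_i and spatial vector fields E_i, B_i, related by the following five substeps. Step 1 (Scheme-a with step Δt/2): (f_1 − f_0)/(Δt/2) + v·∇_x ((f_0 + f_1)/2) = 0, E_1 = E_0, B_1 = B_0. Step 2 (Scheme-b with step Δt/2): (f_2 − f_1)/(Δt/2) + ((E_1 + E_2)/2)·∇_v ((f_1 + f_2)/2) = 0, (E_2 − E_1)/(Δt/2) = −(J_1 + J_2)/2 where J_i(x) = ∫_Ωv f_i(x,v) v dv, and B_2 = B_1. Step 3 (Scheme-c with step Δt): (B_3 − B_2)/Δt = −∇×((E_2 + E_3)/2), (E_3 − E_2)/Δt = ∇×((B_2 + B_3)/2), and (f_3 − f_2)/Δt + (1/2)(v×(B_2 + B_3))·∇_v ((f_2 + f_3)/2) = 0. Step 4: same relations as Step 2 with indices (1,2) replaced by (3,4). Step 5: same relations as Step 1 with indices (0,1) replaced by (4,5). Then the total energy is conserved: ∫_Ωx ∫_Ωv f_5 |v|² dv dx + ∫_Ωx (|E_5|²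 + |B_5|²) dx = ∫_Ωx ∫_Ωv f_0 |v|² dv dx + ∫_Ωx (|E_0|² + |B_0|²) dx. -/

import Mathlib

open MeasureTheory Matrix

noncomputable section

/-- Points of `ℝ³`. -/
abbrev V3 : Type := Fin 3 → ℝ

/-- Partial derivative in the `i`-th coordinate direction. -/
def pd (i : Fin 3) (g : V3 → ℝ) (x : V3) : ℝ := fderiv ℝ g x (Pi.single i 1)

/-- Curl of a vector field on `ℝ³`. -/
def curl (U : V3 → V3) (x : V3) : V3 :=
  ![pd 1 (fun y => U y 2) x - pd 2 (fun y => U y 1) x,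
    pd 2 (fun y => U y 0) x - pd 0 (fun y => U y 2) x,
    pd 0 (fun y => U y 1) x - pd 1 (fun y => U y 0) x]

/-- Gradient in the `x`-variable of a phase-space function. -/
def gradX (f : V3 → V3 → ℝ) (x v : V3) : V3 :=
  fun i => fderiv ℝ (fun y => f y v) x (Pi.single i 1)

/-- Gradient in the `v`-variable of a phase-space function. -/
def gradV (f : V3 → V3 → ℝ) (x v : V3) : V3 :=
  fun i => fderiv ℝ (fun w => f x w) v (Pi.single i 1)

/-- The period box `[0,L]³`. -/
def box (L : ℝ) : Set V3 := Set.Icc 0 (fun _ => L)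

/-- A spatial vector field: smooth and `L`-periodic. -/
def IsSpatialVF (L : ℝ) (U : V3 → V3) : Prop :=
  ContDiff ℝ (⊤ : ℕ∞) U ∧ ∀ (x : V3) (i : Fin 3), U (x + L • (Pi.single i (1:ℝ) : V3)) = U x

/-- A phase-space function: smooth, `L`-periodic in `x`, compactly supported in `v`
(uniformly in `x`). -/
def IsPhase (L : ℝ) (f : V3 → V3 → ℝ) : Prop :=
  ContDiff ℝ (⊤ : ℕ∞) (fun p : V3 × V3 => f p.1 p.2) ∧
  (∀ (x v : V3) (i : Fin 3), f (x + L • (Pi.single i (1:ℝ) : V3)) v = f x v) ∧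
  ∃ R : ℝ, ∀ (x v : V3), R ≤ ‖v‖ → f x v = 0

/-- Current density `J(x) = ∫ f(x,v) v dv`. -/
def Jcur (f : V3 → V3 → ℝ) (x : V3) : V3 := ∫ v : V3, f x v • v

/-- Kinetic energy `∫_Ωx ∫_Ωv f |v|² dv dx`. -/
def kinE (L : ℝ) (f : V3 → V3 → ℝ) : ℝ :=
  ∫ x in box L, ∫ v : V3, f x v * (v ⬝ᵥ v)

/-- Field energy `∫_Ωx |U|² dx`. -/
def fieldE (L : ℝ) (U : V3 → V3) : ℝ := ∫ x in box L, U x ⬝ᵥ U x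

/-! Each substep conserves the total energy on its own. The kinetic energy is linear in `f`, and
the field energies change exactly by the difference of the fields paired with their sum.

* Scheme-a: free transport is an `x`-divergence, so by periodicity the mass at each velocity is
  unchanged.
* Schemes b and c: the force field is divergence-free in `v`, so integrating by parts against
  `|v|²` turns the change of kinetic energy into the work of the force. The electric work is the
  average field paired with the current, which cancels the change of `|E|²` pointwise in `x`.
  The magnetic force `v × B` does no work.
* Scheme-c: the change of field energy is proportional to the integral over a period of
  `B · ∇×E - E · ∇×B`, the divergence of `E × B`.
-/

section Divergence

variable {ι : Type*} [Fintype ι] [DecidableEq ι]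

/-- Divergence of a vector field on `ℝ^ι`, the trace of its Fréchet derivative. -/
def divergence (U : (ι → ℝ) → ι → ℝ) (x : ι → ℝ) : ℝ :=
  ∑ i, fderiv ℝ U x (Pi.single i 1) i

lemma divergence_const (c x : ι → ℝ) : divergence (fun _ => c) x = 0 := by
  simp [divergence]

lemma continuous_divergence {U : (ι → ℝ) → ι → ℝ} (hU : ContDiff ℝ 1 U) :
    Continuous (divergence U) :=
  continuous_finsetSum _ fun i _ => (continuous_apply i).comp
    ((hU.continuous_fderiv one_ne_zero).clm_apply continuous_const)

lemma dotProduct_apply_single (A : (ι → ℝ) →L[ℝ] ℝ) (w : ι → ℝ) :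
    (w ⬝ᵥ fun i => A (Pi.single i 1)) = A w := by
  conv_rhs => rw [pi_eq_sum_univ' w]
  simp [dotProduct]

lemma divergence_smul {φ : (ι → ℝ) → ℝ} {U : (ι → ℝ) → ι → ℝ} {x : ι → ℝ}
    (hφ : DifferentiableAt ℝ φ x) (hU : DifferentiableAt ℝ U x) :
    divergence (fun y => φ y • U y) x = fderiv ℝ φ x (U x) + φ x * divergence U x := by
  rw [← dotProduct_apply_single (fderiv ℝ φ x) (U x)]
  simp only [divergence, fderiv_fun_smul hφ hU, dotProduct, Finset.mul_sum,
    ← Finset.sum_add_distrib]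
  exact Finset.sum_congr rfl fun i _ => by simp [mul_comm, add_comm]

theorem integral_Icc_divergence_eq_zero_of_periodic {n : ℕ} {a b : Fin (n + 1) → ℝ} (hab : a ≤ b)
    {U : (Fin (n + 1) → ℝ) → Fin (n + 1) → ℝ} (hU : ContDiff ℝ 1 U)
    (hper : ∀ i, Function.Periodic (fun x => U x i) (Pi.single i (b i - a i))) :
    ∫ x in Set.Icc a b, divergence U x = 0 := by
  have hdiv := integral_divergence_of_hasFDerivAt_off_countable a b hab U (fderiv ℝ U) ∅
    Set.countable_empty hU.continuous.continuousOn
    (fun x _ => (hU.differentiable one_ne_zero x).hasFDerivAt)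
    ((continuous_divergence hU).continuousOn.integrableOn_compact isCompact_Icc)
  refine hdiv.trans (Finset.sum_eq_zero fun i _ => sub_eq_zero.2 ?_)
  have hface (y : Fin n → ℝ) :
      i.insertNth (b i) y = i.insertNth (a i) y + (Pi.single i (b i - a i) : Fin (n + 1) → ℝ) := by
    ext j
    rcases Fin.eq_self_or_eq_succAbove i j with rfl | ⟨k, rfl⟩ <;> simp
  exact integral_congr_ae (.of_forall fun y => by simpa only [hface] using hper i _)

theorem integral_Icc_fderiv_eq_zero_of_periodic {n : ℕ} {a b : Fin (n + 1) → ℝ} (hab : a ≤ b)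
    {g : (Fin (n + 1) → ℝ) → ℝ} (hg : ContDiff ℝ 1 g)
    (hper : ∀ i, Function.Periodic g (Pi.single i (b i - a i))) (w : Fin (n + 1) → ℝ) :
    ∫ x in Set.Icc a b, fderiv ℝ g x w = 0 := by
  have hflux (x : Fin (n + 1) → ℝ) : divergence (fun y => g y • w) x = fderiv ℝ g x w := by
    rw [divergence_smul (hg.differentiable one_ne_zero x) (differentiableAt_const w),
      divergence_const, mul_zero, add_zero]
  simp only [← hflux]
  refine integral_Icc_divergence_eq_zero_of_periodic hab (hg.smul contDiff_const) fun i x => ?_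
  simp only [hper i x]

theorem integral_divergence_eq_zero_of_hasCompactSupport {U : (ι → ℝ) → ι → ℝ}
    (hU : ContDiff ℝ 1 U) (hsupp : HasCompactSupport U) : ∫ x, divergence U x = 0 := by
  have hint (i : ι) : Integrable (fun x => fderiv ℝ U x (Pi.single i 1)) :=
    ((hU.continuous_fderiv one_ne_zero).clm_apply continuous_const).integrable_of_hasCompactSupport
      (hsupp.fderiv_apply ℝ _)
  have hzero (i : ι) : ∫ x, fderiv ℝ U x (Pi.single i 1) = 0 := by
    simpa using integral_smul_fderiv_eq_neg_fderiv_smul_of_integrable (μ := volume)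
      (f := fun _ : ι → ℝ => (1 : ℝ)) (g := U) (v := Pi.single i 1) (by simp)
      (by simpa using hint i)
      (by simpa using hU.continuous.integrable_of_hasCompactSupport hsupp)
      (by simp) fun x _ => hU.differentiable one_ne_zero x
  have hcoord (i : ι) : ∫ x, fderiv ℝ U x (Pi.single i 1) i = 0 := by
    rw [← eval_integral (fun j => (hint i).eval j), hzero, Pi.zero_apply]
  unfold divergence
  rw [integral_finsetSum _ fun i _ => (hint i).eval i]
  exact Finset.sum_eq_zero fun i _ => hcoord i

theorem integral_fderiv_mul_eq_neg_of_divergence_eq_zero {g φ : (ι → ℝ) → ℝ}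
    {W : (ι → ℝ) → ι → ℝ} (hg : ContDiff ℝ 1 g) (hsupp : HasCompactSupport g)
    (hφ : ContDiff ℝ 1 φ) (hW : ContDiff ℝ 1 W) (hdiv : ∀ v, divergence W v = 0) :
    ∫ v, fderiv ℝ g v (W v) * φ v = -∫ v, g v * fderiv ℝ φ v (W v) := by
  have hflux : ∀ v, divergence (fun w => (g w * φ w) • W w) v
      = fderiv ℝ g v (W v) * φ v + g v * fderiv ℝ φ v (W v) := by
    intro v
    have hgv := hg.differentiable one_ne_zero v
    have hφv := hφ.differentiable one_ne_zero v
    rw [divergence_smul (hgv.fun_mul hφv) (hW.differentiable one_ne_zero v), hdiv,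
      fderiv_fun_mul hgv hφv]
    simp [mul_comm, add_comm]
  have hint_left : Integrable fun v => fderiv ℝ g v (W v) * φ v :=
    (((hg.continuous_fderiv one_ne_zero).clm_apply hW.continuous).mul
      hφ.continuous).integrable_of_hasCompactSupport <|
        ((hsupp.fderiv ℝ).mono fun v hv h => hv (by simp [h])).mul_right
  have hint_right : Integrable fun v => g v * fderiv ℝ φ v (W v) :=
    (hg.continuous.mul ((hφ.continuous_fderiv one_ne_zero).clm_apply
      hW.continuous)).integrable_of_hasCompactSupport hsupp.mul_right
  rw [← add_eq_zero_iff_eq_neg, ← integral_add hint_left hint_right]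
  simp only [← hflux]
  exact integral_divergence_eq_zero_of_hasCompactSupport ((hg.mul hφ).smul hW)
    (hsupp.mul_right.smul_right)

theorem integral_mul_sub_integral_mul_of_midpoint {g h φ : (ι → ℝ) → ℝ} {W : (ι → ℝ) → ι → ℝ}
    {τ : ℝ} (hτ : τ ≠ 0) (hg : ContDiff ℝ 1 g) (hg_supp : HasCompactSupport g)
    (hh : ContDiff ℝ 1 h) (hh_supp : HasCompactSupport h) (hφ : ContDiff ℝ 1 φ)
    (hW : ContDiff ℝ 1 W) (hdiv : ∀ v, divergence W v = 0)
    (hstep : ∀ v, (h v - g v) / τ + fderiv ℝ (fun w => (g w + h w) / 2) v (W v) = 0) :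
    (∫ v, h v * φ v) - ∫ v, g v * φ v = τ * ∫ v, (g v + h v) / 2 * fderiv ℝ φ v (W v) := by
  have hint {k : (ι → ℝ) → ℝ} (hk : ContDiff ℝ 1 k) (hk_supp : HasCompactSupport k) :
      Integrable fun v => k v * φ v :=
    (hk.continuous.mul hφ.continuous).integrable_of_hasCompactSupport hk_supp.mul_right
  have hmid_supp : HasCompactSupport fun w => (g w + h w) / 2 :=
    (hg_supp.add hh_supp).comp_left (g := (· / 2)) (zero_div 2)
  calc (∫ v, h v * φ v) - ∫ v, g v * φ v
      = ∫ v, -τ * (fderiv ℝ (fun w => (g w + h w) / 2) v (W v) * φ v) := by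
        rw [← integral_sub (hint hh hh_supp) (hint hg hg_supp)]
        refine integral_congr_ae (.of_forall fun v => ?_)
        have hv := hstep v
        field_simp at hv
        linear_combination φ v * hv
    _ = τ * ∫ v, (g v + h v) / 2 * fderiv ℝ φ v (W v) := by
        rw [integral_const_mul, integral_fderiv_mul_eq_neg_of_divergence_eq_zero
          ((hg.add hh).div_const 2) hmid_supp hφ hW hdiv, neg_mul_neg]

end Divergence

lemma dotProduct_integral {ι α : Type*} [Fintype ι] [MeasurableSpace α] {μ : Measure α}
    {F : α → ι → ℝ} (w : ι → ℝ) (hF : Integrable F μ) :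
    w ⬝ᵥ ∫ a, F a ∂μ = ∫ a, w ⬝ᵥ F a ∂μ :=
  ((dotProductBilin ℝ ℝ w).toContinuousLinearMap.integral_comp_comm hF).symm

lemma integrable_restrict_prod_of_eq_zero_off_compact {X Y : Type*} [TopologicalSpace X]
    [T2Space X] [MeasurableSpace X] [OpensMeasurableSpace X] [TopologicalSpace Y]
    [T2Space Y] [MeasurableSpace Y] [OpensMeasurableSpace (X × Y)] {μ : Measure X} {ν : Measure Y}
    [SFinite μ] [SFinite ν] [IsFiniteMeasureOnCompacts (μ.prod ν)] {K : Set X} {K' : Set Y}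
    (hK : IsCompact K) (hK' : IsCompact K') {h : X × Y → ℝ} (hh : Continuous h)
    (hzero : ∀ x, ∀ y ∉ K', h (x, y) = 0) : Integrable h ((μ.restrict K).prod ν) := by
  rw [← Measure.restrict_univ (μ := ν), Measure.prod_restrict, ← IntegrableOn]
  have hon : IntegrableOn h (K ×ˢ K') (μ.prod ν) :=
    hh.continuousOn.integrableOn_compact (hK.prod hK')
  refine hon.of_forall_sdiff_eq_zero (hK.measurableSet.prod .univ) ?_
  rintro ⟨x, y⟩ ⟨⟨hx, -⟩, hy⟩
  exact hzero x y fun hy' => hy ⟨hx, hy'⟩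

section Algebra

variable {ι : Type*} [Fintype ι]

lemma dotProduct_self_sub_dotProduct_self {R : Type*} [CommRing R] (a b : ι → R) :
    a ⬝ᵥ a - b ⬝ᵥ b = (a - b) ⬝ᵥ (b + a) := by
  rw [sub_dotProduct, dotProduct_add, dotProduct_add, dotProduct_comm b a]
  ring

lemma dotProduct_self_sub_eq_of_midpoint {𝕜 : Type*} [Field 𝕜] [NeZero (2 : 𝕜)] {τ : 𝕜}
    (hτ : τ ≠ 0) {a b c : ι → 𝕜} (hstep : τ⁻¹ • (b - a) = c) :
    b ⬝ᵥ b - a ⬝ᵥ a = 2 * τ * (c ⬝ᵥ (2 : 𝕜)⁻¹ • (a + b)) := by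
  rw [dotProduct_self_sub_dotProduct_self, (inv_smul_eq_iff₀ hτ).1 hstep, smul_dotProduct,
    dotProduct_smul, smul_eq_mul, smul_eq_mul]
  field_simp

lemma contDiff_dotProduct_self {n : WithTop ℕ∞} : ContDiff ℝ n fun v : ι → ℝ => v ⬝ᵥ v := by
  unfold dotProduct
  fun_prop

lemma fderiv_dotProduct_self (v w : ι → ℝ) :
    fderiv ℝ (fun u : ι → ℝ => u ⬝ᵥ u) v w = 2 * (w ⬝ᵥ v) := by
  have hcoord (i : ι) : HasFDerivAt (fun u : ι → ℝ => u i) (.proj i : (ι → ℝ) →L[ℝ] ℝ) v :=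
    hasFDerivAt_apply i v
  have hsum : HasFDerivAt (fun u : ι → ℝ => u ⬝ᵥ u) _ v :=
    HasFDerivAt.fun_sum (u := Finset.univ) fun i _ => (hcoord i).fun_mul (hcoord i)
  rw [hsum.fderiv, two_mul]
  simp [dotProduct, Finset.sum_add_distrib, mul_comm]

end Algebra

section Curl

variable {E : Type*} [NormedAddCommGroup E] [NormedSpace ℝ E]

lemma fderiv_cross {P Q : E → V3} {x : E} (hP : DifferentiableAt ℝ P x)
    (hQ : DifferentiableAt ℝ Q x) (w : E) :
    fderiv ℝ (fun y => P y ⨯₃ Q y) x w = P x ⨯₃ fderiv ℝ Q x w + fderiv ℝ P x w ⨯₃ Q x :=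
  congrArg (· w) (crossProduct.toContinuousBilinearMap.hasFDerivAt_of_bilinear
    hP.hasFDerivAt hQ.hasFDerivAt).fderiv

lemma contDiff_cross {n : WithTop ℕ∞} {P Q : E → V3} (hP : ContDiff ℝ n P)
    (hQ : ContDiff ℝ n Q) : ContDiff ℝ n fun y => P y ⨯₃ Q y :=
  ((LinearMap.toContinuousBilinearMap (𝕜 := ℝ) crossProduct).contDiff.comp hP).clm_apply hQ

lemma pd_apply {U : V3 → V3} {x : V3} (hU : DifferentiableAt ℝ U x) (i j : Fin 3) :
    pd i (fun y => U y j) x = fderiv ℝ U x (Pi.single i 1) j := by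
  simp [pd, fderiv_apply hU]

theorem divergence_cross {P Q : V3 → V3} {x : V3} (hP : DifferentiableAt ℝ P x)
    (hQ : DifferentiableAt ℝ Q x) :
    divergence (fun y => P y ⨯₃ Q y) x = curl P x ⬝ᵥ Q x - curl Q x ⬝ᵥ P x := by
  simp only [divergence, fderiv_cross hP hQ]
  simp only [curl, pd_apply hP, pd_apply hQ, cross_apply, dotProduct, Fin.sum_univ_three,
    Pi.add_apply, Matrix.cons_val]
  ring

lemma divergence_cross_const (b v : V3) : divergence (fun w => w ⨯₃ b) v = 0 := by
  rw [divergence_cross differentiableAt_fun_id (differentiableAt_const b)]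
  have hcoord (i j : Fin 3) : pd i (fun y : V3 => y j) v = (Pi.single i 1 : V3) j := by
    simp [pd_apply differentiableAt_fun_id]
  have hconst (i j : Fin 3) : pd i (fun _ : V3 => b j) v = 0 := by simp [pd]
  simp [curl, hcoord, hconst]

theorem integral_box_curl_dotProduct_sub {L : ℝ} (hL : 0 ≤ L) {P Q : V3 → V3}
    (hP : ContDiff ℝ 1 P) (hQ : ContDiff ℝ 1 Q)
    (hP_per : ∀ i, Function.Periodic P (Pi.single i L))
    (hQ_per : ∀ i, Function.Periodic Q (Pi.single i L)) :
    ∫ x in box L, (curl P x ⬝ᵥ Q x - curl Q x ⬝ᵥ P x) = 0 := by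
  simp only [← divergence_cross (hP.differentiable one_ne_zero _) (hQ.differentiable one_ne_zero _)]
  refine integral_Icc_divergence_eq_zero_of_periodic (fun _ => hL) (contDiff_cross hP hQ) ?_
  intro i x
  simp only [sub_zero, hP_per i x, hQ_per i x]

end Curl

/-- A `C¹` vector field that is `L`-periodic in each coordinate direction. -/
structure IsC1SpatialVF (L : ℝ) (U : V3 → V3) : Prop where
  contDiff : ContDiff ℝ 1 U
  periodic : ∀ i, Function.Periodic U (Pi.single i L)

/-- A `C¹` phase-space density, `L`-periodic in position, whose support in velocity lies in a
ball that does not depend on the position. -/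
structure IsC1Phase (L : ℝ) (f : V3 → V3 → ℝ) : Prop where
  contDiff : ContDiff ℝ 1 fun p : V3 × V3 => f p.1 p.2
  periodic : ∀ i v, Function.Periodic (fun x => f x v) (Pi.single i L)
  exists_radius : ∃ R : ℝ, ∀ x v, R ≤ ‖v‖ → f x v = 0

lemma dotProduct_gradX (f : V3 → V3 → ℝ) (x v w : V3) :
    w ⬝ᵥ gradX f x v = fderiv ℝ (fun y => f y v) x w :=
  dotProduct_apply_single _ w

lemma dotProduct_gradV (f : V3 → V3 → ℝ) (x v w : V3) :
    w ⬝ᵥ gradV f x v = fderiv ℝ (f x) v w :=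
  dotProduct_apply_single _ w

lemma smul_single_one_eq (L : ℝ) (i : Fin 3) : L • (Pi.single i 1 : V3) = Pi.single i L := by
  rw [← Pi.single_smul, smul_eq_mul, mul_one]

lemma IsSpatialVF.isC1SpatialVF {L : ℝ} {U : V3 → V3} (hU : IsSpatialVF L U) :
    IsC1SpatialVF L U where
  contDiff := hU.1.of_le (by simp)
  periodic i x := by rw [← smul_single_one_eq, hU.2]

lemma IsPhase.isC1Phase {L : ℝ} {f : V3 → V3 → ℝ} (hf : IsPhase L f) : IsC1Phase L f where
  contDiff := hf.1.of_le (by simp)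
  periodic i v x := by simpa only [smul_single_one_eq] using hf.2.1 x v i
  exists_radius := hf.2.2

lemma IsC1SpatialVF.midpoint {L : ℝ} {U V : V3 → V3} (hU : IsC1SpatialVF L U)
    (hV : IsC1SpatialVF L V) : IsC1SpatialVF L fun x => (2 : ℝ)⁻¹ • (U x + V x) where
  contDiff := (hU.contDiff.add hV.contDiff).const_smul _
  periodic i x := by simp only [hU.periodic i x, hV.periodic i x]

lemma integrableOn_box_dotProduct_self {L : ℝ} {U : V3 → V3} (hU : Continuous U) :
    IntegrableOn (fun x => U x ⬝ᵥ U x) (box L) :=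
  (hU.dotProduct hU).continuousOn.integrableOn_compact isCompact_Icc

namespace IsC1Phase

variable {L : ℝ} {f g : V3 → V3 → ℝ}

lemma contDiff_position (hf : IsC1Phase L f) (v : V3) : ContDiff ℝ 1 fun x => f x v :=
  hf.contDiff.comp (contDiff_id.prodMk contDiff_const)

lemma contDiff_velocity (hf : IsC1Phase L f) (x : V3) : ContDiff ℝ 1 (f x) :=
  hf.contDiff.comp (contDiff_const.prodMk contDiff_id)

lemma hasCompactSupport (hf : IsC1Phase L f) (x : V3) : HasCompactSupport (f x) := by
  obtain ⟨R, hR⟩ := hf.exists_radius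
  refine .intro (isCompact_closedBall 0 R) fun v hv => hR x v ?_
  exact (not_le.1 fun h => hv (mem_closedBall_zero_iff.2 h)).le

lemma integrable_mul_dotProduct_self (hf : IsC1Phase L f) :
    Integrable (fun p : V3 × V3 => f p.1 p.2 * (p.2 ⬝ᵥ p.2))
      ((volume.restrict (box L)).prod volume) := by
  obtain ⟨R, hR⟩ := hf.exists_radius
  refine integrable_restrict_prod_of_eq_zero_off_compact isCompact_Icc
    (isCompact_closedBall (0 : V3) R)
    (hf.contDiff.continuous.mul (continuous_snd.dotProduct continuous_snd)) fun x v hv => ?_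
  rw [hR x v (not_le.1 fun h => hv (mem_closedBall_zero_iff.2 h)).le, zero_mul]

lemma kinE_eq_integral_velocity (hf : IsC1Phase L f) :
    kinE L f = ∫ v, (∫ x in box L, f x v) * (v ⬝ᵥ v) := by
  simp only [← integral_mul_const]
  exact integral_integral_swap hf.integrable_mul_dotProduct_self

lemma dotProduct_Jcur (hf : IsC1Phase L f) (w x : V3) :
    w ⬝ᵥ Jcur f x = ∫ v, f x v * (w ⬝ᵥ v) := by
  have hint : Integrable fun v => f x v • v :=
    ((hf.contDiff_velocity x).continuous.smul continuous_id).integrable_of_hasCompactSupport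
      (hf.hasCompactSupport x).smul_right
  simp only [Jcur, dotProduct_integral w hint, dotProduct_smul, smul_eq_mul]

lemma integral_kinetic_sub (hf : IsC1Phase L f) (hg : IsC1Phase L g) {τ : ℝ} (hτ : τ ≠ 0)
    {W : V3 → V3} (hW : ContDiff ℝ 1 W) (hdiv : ∀ v, divergence W v = 0) (x : V3)
    (hstep : ∀ v, (g x v - f x v) / τ + W v ⬝ᵥ gradV (fun y w => (f y w + g y w) / 2) x v = 0) :
    (∫ v, g x v * (v ⬝ᵥ v)) - ∫ v, f x v * (v ⬝ᵥ v)
      = τ * ∫ v, (f x v + g x v) * (W v ⬝ᵥ v) := by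
  have hstep' (v : V3) :
      (g x v - f x v) / τ + fderiv ℝ (fun w => (f x w + g x w) / 2) v (W v) = 0 := by
    rw [← hstep v, dotProduct_gradV]
  rw [integral_mul_sub_integral_mul_of_midpoint hτ (hf.contDiff_velocity x)
    (hf.hasCompactSupport x) (hg.contDiff_velocity x) (hg.hasCompactSupport x)
    contDiff_dotProduct_self hW hdiv hstep']
  simp only [fderiv_dotProduct_self]
  congr! 3
  ring

end IsC1Phase

/-- A state of the Vlasov–Maxwell system: phase-space density, electric field, magnetic field. -/
structure VlasovMaxwellState where
  f : V3 → V3 → ℝ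
  E : V3 → V3
  B : V3 → V3

namespace VlasovMaxwellState

/-- Total energy over the period box, kinetic plus electromagnetic. -/
def energy (L : ℝ) (s : VlasovMaxwellState) : ℝ :=
  kinE L s.f + (fieldE L s.E + fieldE L s.B)

/-- All three components of the state are `C¹` and `L`-periodic in position, the density being
compactly supported in velocity. -/
structure IsC1 (L : ℝ) (s : VlasovMaxwellState) : Prop where
  density : IsC1Phase L s.f
  electric : IsC1SpatialVF L s.E
  magnetic : IsC1SpatialVF L s.B

end VlasovMaxwellState

section Substeps

variable {L τ : ℝ} {s t : VlasovMaxwellState}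

/-- One step of Scheme-a, of size `τ`, from `s` to `t`: free transport in position. -/
structure IsSchemeA (τ : ℝ) (s t : VlasovMaxwellState) : Prop where
  density : ∀ x v, (t.f x v - s.f x v) / τ
    + v ⬝ᵥ gradX (fun y w => (s.f y w + t.f y w) / 2) x v = 0
  electric : t.E = s.E
  magnetic : t.B = s.B

/-- One step of Scheme-b, of size `τ`, from `s` to `t`: acceleration by the electric field,
coupled to Ampère's law without the curl term. -/
structure IsSchemeB (τ : ℝ) (s t : VlasovMaxwellState) : Prop where
  density : ∀ x v, (t.f x v - s.f x v) / τ
    + ((2 : ℝ)⁻¹ • (s.E x + t.E x)) ⬝ᵥ gradV (fun y w => (s.f y w + t.f y w) / 2) x v = 0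
  electric : ∀ x, τ⁻¹ • (t.E x - s.E x) = -((2 : ℝ)⁻¹ • (Jcur s.f x + Jcur t.f x))
  magnetic : t.B = s.B

/-- One step of Scheme-c, of size `τ`, from `s` to `t`: Maxwell's equations in vacuum, and
rotation of the density by the magnetic field. -/
structure IsSchemeC (τ : ℝ) (s t : VlasovMaxwellState) : Prop where
  density : ∀ x v, (t.f x v - s.f x v) / τ
    + ((2 : ℝ)⁻¹ • v ⨯₃ (s.B x + t.B x)) ⬝ᵥ gradV (fun y w => (s.f y w + t.f y w) / 2) x v = 0
  electric : ∀ x, τ⁻¹ • (t.E x - s.E x) = curl (fun y => (2 : ℝ)⁻¹ • (s.B y + t.B y)) x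
  magnetic : ∀ x, τ⁻¹ • (t.B x - s.B x) = -curl (fun y => (2 : ℝ)⁻¹ • (s.E y + t.E y)) x

lemma IsSchemeA.integral_box_eq (h : IsSchemeA τ s t) (hL : 0 ≤ L) (hτ : τ ≠ 0)
    (hs : IsC1Phase L s.f) (ht : IsC1Phase L t.f) (v : V3) :
    ∫ x in box L, t.f x v = ∫ x in box L, s.f x v := by
  have hint {f : V3 → V3 → ℝ} (hf : IsC1Phase L f) : IntegrableOn (fun x => f x v) (box L) :=
    (hf.contDiff_position v).continuous.continuousOn.integrableOn_compact isCompact_Icc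
  have hdiff (x : V3) :
      t.f x v - s.f x v = -τ * fderiv ℝ (fun y => (s.f y v + t.f y v) / 2) x v := by
    have hx := h.density x v
    rw [dotProduct_gradX] at hx
    field_simp at hx
    linear_combination hx
  rw [← sub_eq_zero, ← integral_sub (hint ht) (hint hs)]
  simp only [hdiff]
  rw [integral_const_mul]
  refine mul_eq_zero_of_right _ (integral_Icc_fderiv_eq_zero_of_periodic (fun _ => hL)
    (((hs.contDiff_position v).add (ht.contDiff_position v)).div_const 2) (fun i x => ?_) v)
  simp only [sub_zero, hs.periodic i v x, ht.periodic i v x]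

theorem IsSchemeA.energy_eq (h : IsSchemeA τ s t) (hL : 0 ≤ L) (hτ : τ ≠ 0)
    (hs : IsC1Phase L s.f) (ht : IsC1Phase L t.f) : t.energy L = s.energy L := by
  simp only [VlasovMaxwellState.energy, hs.kinE_eq_integral_velocity,
    ht.kinE_eq_integral_velocity, h.integral_box_eq hL hτ hs ht, h.electric, h.magnetic]

lemma IsSchemeB.integral_kinetic_sub (h : IsSchemeB τ s t) (hτ : τ ≠ 0)
    (hs : IsC1Phase L s.f) (ht : IsC1Phase L t.f) (x : V3) :
    (∫ v, t.f x v * (v ⬝ᵥ v)) - ∫ v, s.f x v * (v ⬝ᵥ v)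
      = s.E x ⬝ᵥ s.E x - t.E x ⬝ᵥ t.E x := by
  set w : V3 := (2 : ℝ)⁻¹ • (s.E x + t.E x) with hw
  have hint {f : V3 → V3 → ℝ} (hf : IsC1Phase L f) : Integrable fun v => f x v * (w ⬝ᵥ v) :=
    ((hf.contDiff_velocity x).continuous.mul
      (continuous_const.dotProduct continuous_id)).integrable_of_hasCompactSupport
        (hf.hasCompactSupport x).mul_right
  have hcurrent : -τ • (Jcur s.f x + Jcur t.f x) = (2 : ℝ) • (t.E x - s.E x) := by
    rw [(inv_smul_eq_iff₀ hτ).1 (h.electric x)]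
    module
  calc (∫ v, t.f x v * (v ⬝ᵥ v)) - ∫ v, s.f x v * (v ⬝ᵥ v)
      = τ * ∫ v, (s.f x v + t.f x v) * (w ⬝ᵥ v) :=
        hs.integral_kinetic_sub ht hτ contDiff_const (divergence_const w) x (h.density x)
    _ = τ * (w ⬝ᵥ (Jcur s.f x + Jcur t.f x)) := by
        simp only [add_mul, dotProduct_add, integral_add (hint hs) (hint ht),
          hs.dotProduct_Jcur, ht.dotProduct_Jcur]
    _ = -(w ⬝ᵥ (-τ • (Jcur s.f x + Jcur t.f x))) := by
        rw [dotProduct_smul, smul_eq_mul]; ring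
    _ = -((t.E x - s.E x) ⬝ᵥ (s.E x + t.E x)) := by
        rw [hcurrent, hw, smul_dotProduct, dotProduct_smul, smul_smul, dotProduct_comm]
        norm_num
    _ = s.E x ⬝ᵥ s.E x - t.E x ⬝ᵥ t.E x := by
        rw [← dotProduct_self_sub_dotProduct_self, neg_sub]

theorem IsSchemeB.energy_eq (h : IsSchemeB τ s t) (hτ : τ ≠ 0)
    (hs : IsC1Phase L s.f) (ht : IsC1Phase L t.f) (hsE : Continuous s.E) (htE : Continuous t.E) :
    t.energy L = s.energy L := by
  have hsum {r : VlasovMaxwellState} (hr : IsC1Phase L r.f) (hrE : Continuous r.E) :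
      kinE L r.f + fieldE L r.E
        = ∫ x in box L, ((∫ v, r.f x v * (v ⬝ᵥ v)) + r.E x ⬝ᵥ r.E x) :=
    (integral_add hr.integrable_mul_dotProduct_self.integral_prod_left
      (integrableOn_box_dotProduct_self hrE)).symm
  have hlocal (x : V3) : (∫ v, t.f x v * (v ⬝ᵥ v)) + t.E x ⬝ᵥ t.E x
      = (∫ v, s.f x v * (v ⬝ᵥ v)) + s.E x ⬝ᵥ s.E x := by
    linear_combination h.integral_kinetic_sub hτ hs ht x
  simp only [VlasovMaxwellState.energy, ← add_assoc, hsum hs hsE, hsum ht htE, hlocal, h.magnetic]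

lemma IsSchemeC.kinE_eq (h : IsSchemeC τ s t) (hτ : τ ≠ 0)
    (hs : IsC1Phase L s.f) (ht : IsC1Phase L t.f) : kinE L t.f = kinE L s.f := by
  refine integral_congr_ae (.of_forall fun x => sub_eq_zero.1 ?_)
  set b : V3 := (2 : ℝ)⁻¹ • (s.B x + t.B x) with hb
  have hdensity (v : V3) : (t.f x v - s.f x v) / τ
      + (v ⨯₃ b) ⬝ᵥ gradV (fun y w => (s.f y w + t.f y w) / 2) x v = 0 := by
    rw [hb, map_smul, h.density]
  have hwork (v : V3) : (v ⨯₃ b) ⬝ᵥ v = 0 := by rw [dotProduct_comm, dot_self_cross]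
  simpa [hwork] using hs.integral_kinetic_sub ht hτ (contDiff_cross contDiff_id contDiff_const)
    (divergence_cross_const b) x hdensity

lemma IsSchemeC.fieldE_add_fieldE_eq (h : IsSchemeC τ s t) (hL : 0 ≤ L) (hτ : τ ≠ 0)
    (hsE : IsC1SpatialVF L s.E) (htE : IsC1SpatialVF L t.E)
    (hsB : IsC1SpatialVF L s.B) (htB : IsC1SpatialVF L t.B) :
    fieldE L t.E + fieldE L t.B = fieldE L s.E + fieldE L s.B := by
  have hint {U : V3 → V3} (hU : IsC1SpatialVF L U) : IntegrableOn (fun x => U x ⬝ᵥ U x) (box L) :=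
    integrableOn_box_dotProduct_self hU.contDiff.continuous
  let E : V3 → V3 := fun y => (2 : ℝ)⁻¹ • (s.E y + t.E y)
  let B : V3 → V3 := fun y => (2 : ℝ)⁻¹ • (s.B y + t.B y)
  have hE_incr (x : V3) : t.E x ⬝ᵥ t.E x - s.E x ⬝ᵥ s.E x = 2 * τ * (curl B x ⬝ᵥ E x) :=
    dotProduct_self_sub_eq_of_midpoint hτ (h.electric x)
  have hB_incr (x : V3) : t.B x ⬝ᵥ t.B x - s.B x ⬝ᵥ s.B x = 2 * τ * (-curl E x ⬝ᵥ B x) :=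
    dotProduct_self_sub_eq_of_midpoint hτ (h.magnetic x)
  have hdiff (x : V3) : (t.E x ⬝ᵥ t.E x + t.B x ⬝ᵥ t.B x) - (s.E x ⬝ᵥ s.E x + s.B x ⬝ᵥ s.B x)
      = -2 * τ * (curl E x ⬝ᵥ B x - curl B x ⬝ᵥ E x) := by
    linear_combination hE_incr x + hB_incr x + 2 * τ * neg_dotProduct (curl E x) (B x)
  simp only [fieldE]
  rw [← integral_add (hint htE) (hint htB), ← integral_add (hint hsE) (hint hsB), ← sub_eq_zero,
    ← integral_sub ((hint htE).fun_add (hint htB)) ((hint hsE).fun_add (hint hsB))]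
  simp only [hdiff]
  rw [integral_const_mul, integral_box_curl_dotProduct_sub hL (hsE.midpoint htE).contDiff
    (hsB.midpoint htB).contDiff (hsE.midpoint htE).periodic (hsB.midpoint htB).periodic, mul_zero]

theorem IsSchemeC.energy_eq (h : IsSchemeC τ s t) (hL : 0 ≤ L) (hτ : τ ≠ 0)
    (hs : s.IsC1 L) (ht : t.IsC1 L) : t.energy L = s.energy L := by
  rw [VlasovMaxwellState.energy, VlasovMaxwellState.energy, h.kinE_eq hτ hs.density ht.density,
    h.fieldE_add_fieldE_eq hL hτ hs.electric ht.electric hs.magnetic ht.magnetic]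

end Substeps

theorem scheme5_energy_conservation_general {L Δt : ℝ} (hL : 0 ≤ L) (hΔt : Δt ≠ 0)
    {s₀ s₁ s₂ s₃ s₄ s₅ : VlasovMaxwellState} (h₀ : s₀.IsC1 L) (h₁ : s₁.IsC1 L) (h₂ : s₂.IsC1 L)
    (h₃ : s₃.IsC1 L) (h₄ : s₄.IsC1 L) (h₅ : s₅.IsC1 L) (step₁ : IsSchemeA (Δt / 2) s₀ s₁)
    (step₂ : IsSchemeB (Δt / 2) s₁ s₂) (step₃ : IsSchemeC Δt s₂ s₃)
    (step₄ : IsSchemeB (Δt / 2) s₃ s₄) (step₅ : IsSchemeA (Δt / 2) s₄ s₅) :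
    s₅.energy L = s₀.energy L := by
  have hhalf : Δt / 2 ≠ 0 := div_ne_zero hΔt two_ne_zero
  calc s₅.energy L
      = s₄.energy L := step₅.energy_eq hL hhalf h₄.density h₅.density
    _ = s₃.energy L := step₄.energy_eq hhalf h₃.density h₄.density
        h₃.electric.contDiff.continuous h₄.electric.contDiff.continuous
    _ = s₂.energy L := step₃.energy_eq hL hΔt h₂ h₃
    _ = s₁.energy L := step₂.energy_eq hhalf h₁.density h₂.density
        h₁.electric.contDiff.continuous h₂.electric.contDiff.continuous
    _ = s₀.energy L := step₁.energy_eq hL hhalf h₀.density h₁.density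

/-- Energy conservation of the Strang-split Scheme-5 (Theorem 2.2). -/
theorem scheme5_energy_conservation
    (L Δt : ℝ) (hL : 0 < L) (hΔt : 0 < Δt)
    (f0 f1 f2 f3 f4 f5 : V3 → V3 → ℝ)
    (E0 E1 E2 E3 E4 E5 B0 B1 B2 B3 B4 B5 : V3 → V3)
    (hf0 : IsPhase L f0) (hf1 : IsPhase L f1) (hf2 : IsPhase L f2)
    (hf3 : IsPhase L f3) (hf4 : IsPhase L f4) (hf5 : IsPhase L f5)
    (hE0 : IsSpatialVF L E0) (hE1 : IsSpatialVF L E1) (hE2 : IsSpatialVF L E2)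
    (hE3 : IsSpatialVF L E3) (hE4 : IsSpatialVF L E4) (hE5 : IsSpatialVF L E5)
    (hB0 : IsSpatialVF L B0) (hB1 : IsSpatialVF L B1) (hB2 : IsSpatialVF L B2)
    (hB3 : IsSpatialVF L B3) (hB4 : IsSpatialVF L B4) (hB5 : IsSpatialVF L B5)
    -- Step 1: Scheme-a with step Δt/2
    (hstep1f : ∀ x v : V3,
      (f1 x v - f0 x v) / (Δt / 2)
        + v ⬝ᵥ gradX (fun y w => (f0 y w + f1 y w) / 2) x v = 0)
    (hstep1E : ∀ x : V3, E1 x = E0 x) (hstep1B : ∀ x : V3, B1 x = B0 x)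
    -- Step 2: Scheme-b with step Δt/2
    (hstep2f : ∀ x v : V3,
      (f2 x v - f1 x v) / (Δt / 2)
        + ((2:ℝ)⁻¹ • (E1 x + E2 x))
            ⬝ᵥ gradV (fun y w => (f1 y w + f2 y w) / 2) x v = 0)
    (hstep2E : ∀ x : V3,
      (Δt / 2)⁻¹ • (E2 x - E1 x) = - ((2:ℝ)⁻¹ • (Jcur f1 x + Jcur f2 x)))
    (hstep2B : ∀ x : V3, B2 x = B1 x)
    -- Step 3: Scheme-c with step Δt
    (hstep3B : ∀ x : V3,
      Δt⁻¹ • (B3 x - B2 x) = - curl (fun y => (2:ℝ)⁻¹ • (E2 y + E3 y)) x)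
    (hstep3E : ∀ x : V3,
      Δt⁻¹ • (E3 x - E2 x) = curl (fun y => (2:ℝ)⁻¹ • (B2 y + B3 y)) x)
    (hstep3f : ∀ x v : V3,
      (f3 x v - f2 x v) / Δt
        + ((2:ℝ)⁻¹ • crossProduct v (B2 x + B3 x))
            ⬝ᵥ gradV (fun y w => (f2 y w + f3 y w) / 2) x v = 0)
    -- Step 4: Scheme-b with step Δt/2
    (hstep4f : ∀ x v : V3,
      (f4 x v - f3 x v) / (Δt / 2)
        + ((2:ℝ)⁻¹ • (E3 x + E4 x))
            ⬝ᵥ gradV (fun y w => (f3 y w + f4 y w) / 2) x v = 0)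
    (hstep4E : ∀ x : V3,
      (Δt / 2)⁻¹ • (E4 x - E3 x) = - ((2:ℝ)⁻¹ • (Jcur f3 x + Jcur f4 x)))
    (hstep4B : ∀ x : V3, B4 x = B3 x)
    -- Step 5: Scheme-a with step Δt/2
    (hstep5f : ∀ x v : V3,
      (f5 x v - f4 x v) / (Δt / 2)
        + v ⬝ᵥ gradX (fun y w => (f4 y w + f5 y w) / 2) x v = 0)
    (hstep5E : ∀ x : V3, E5 x = E4 x) (hstep5B : ∀ x : V3, B5 x = B4 x) :
    kinE L f5 + (fieldE L E5 + fieldE L B5)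
      = kinE L f0 + (fieldE L E0 + fieldE L B0) := by
  have regular {f : V3 → V3 → ℝ} {E B : V3 → V3} (hf : IsPhase L f) (hE : IsSpatialVF L E)
      (hB : IsSpatialVF L B) : VlasovMaxwellState.IsC1 L ⟨f, E, B⟩ :=
    ⟨hf.isC1Phase, hE.isC1SpatialVF, hB.isC1SpatialVF⟩
  exact scheme5_energy_conservation_general hL.le hΔt.ne'
    (regular hf0 hE0 hB0) (regular hf1 hE1 hB1) (regular hf2 hE2 hB2)
    (regular hf3 hE3 hB3) (regular hf4 hE4 hB4) (regular hf5 hE5 hB5)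
    ⟨hstep1f, funext hstep1E, funext hstep1B⟩ ⟨hstep2f, hstep2E, funext hstep2B⟩
    ⟨hstep3f, hstep3E, hstep3B⟩ ⟨hstep4f, hstep4E, funext hstep4B⟩
    ⟨hstep5f, funext hstep5E, funext hstep5B⟩
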